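/- arXiv:1210.4806 — 2 statements merged into one kernel-verified Lean document; each statement's English description precedes it below -/
import Mathlib

section
/- Let F be a field of characteristic zero, G a group (not necessarily finite), and V₁ and V₂ two finite-dimensional F-linear representations of G, each semisimple (i.e., semisimple as a module over the group algebra F[G]). Then V₁ and V₂ are isomorphic as representations of G if and only if their characters are equal, i.e., tr(ρ₁(g)) = tr(ρ₂(g)) for every g ∈ G. -/
/-!
Pass to modules over an algebra `A` (for representations, the monoid algebra): there the trace of
the action of `a : A` is additive along direct sums, so isomorphic summands can be cancelled and it
suffices that two semisimple modules `M ≠ 0` and `N` with equal characters admit a nonzero map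
`M → N`. If there were none, semisimplicity would exclude nonzero maps `N → M` as well, so the
projection of `M × N` onto `M` would commute with all `A`-endomorphisms. By the density theorem some
`a : A` would act on `M × N` as this projection, and comparing traces would give `dim M = 0` in `F`,
which is impossible in characteristic zero.
-/

open Module LinearMap

theorem commute_inl_comp_fst {A M N : Type*} [Semiring A] [AddCommMonoid M] [Module A M]
    [AddCommMonoid N] [Module A N]
    (hMN : ∀ f : M →ₗ[A] N, f = 0) (hNM : ∀ f : N →ₗ[A] M, f = 0)
    (f : End A (M × N)) : Commute (inl A M N ∘ₗ fst A M N) f := by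
  have hinl : snd A M N ∘ₗ f ∘ₗ inl A M N = 0 := hMN _
  have hinr : fst A M N ∘ₗ f ∘ₗ inr A M N = 0 := hNM _
  refine LinearMap.prod_ext (LinearMap.ext fun m ↦ ?_) (LinearMap.ext fun n ↦ ?_)
  · exact Prod.ext rfl congr($hinl m).symm
  · have hfst : (f (0, n)).1 = 0 := congr($hinr n)
    change ((f (0, n)).1, (0 : N)) = f (0, 0)
    rw [hfst]
    exact (map_zero f).symm

section Semisimple

variable {A M N : Type*} [Ring A] [AddCommGroup M] [Module A M] [AddCommGroup N] [Module A N]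

theorem isSemisimpleModule_prod [IsSemisimpleModule A M] [IsSemisimpleModule A N] :
    IsSemisimpleModule A (M × N) := by
  have : IsSemisimpleModule A (⊤ : Submodule A (M × N)) := by
    rw [← sup_range_inl_inr]
    exact .sup (.range _) (.range _)
  exact .congr Submodule.topEquiv.symm

theorem exists_comp_comp_eq_self [IsSemisimpleModule A M] [IsSemisimpleModule A N]
    (f : M →ₗ[A] N) : ∃ g : N →ₗ[A] M, f ∘ₗ g ∘ₗ f = f := by
  obtain ⟨s, hs⟩ := IsSemisimpleModule.lifting_property f.rangeRestrict
    f.surjective_rangeRestrict LinearMap.id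
  obtain ⟨g, hg⟩ := IsSemisimpleModule.extension_property (range f).subtype
    (range f).subtype_injective s
  refine ⟨g, LinearMap.ext fun x ↦ ?_⟩
  have hgs : g (f x) = s (f.rangeRestrict x) := congr($hg (f.rangeRestrict x))
  have hfs : f.rangeRestrict (s (f.rangeRestrict x)) = f.rangeRestrict x :=
    congr($hs (f.rangeRestrict x))
  simpa [hgs] using congr(($hfs : N))

theorem exists_smul_eq_of_forall_commute [IsSemisimpleModule A M] [Module.Finite (End A M) M]
    {p : End A M} (hp : ∀ f : End A M, Commute p f) : ∃ a : A, ∀ x : M, a • x = p x := by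
  let p' : End (End A M) M := { p with map_smul' := fun f x ↦ congr($(hp f) x) }
  obtain ⟨a, ha⟩ := Module.Finite.toModuleEnd_moduleEnd_surjective (R := A) p'
  exact ⟨a, fun x ↦ congr($ha x)⟩

theorem exists_smul_eq_self_and_smul_eq_zero
    [IsSemisimpleModule A M] [IsSemisimpleModule A N] [Module.Finite (End A (M × N)) (M × N)]
    (hMN : ∀ f : M →ₗ[A] N, f = 0) :
    ∃ a : A, (∀ m : M, a • m = m) ∧ ∀ n : N, a • n = 0 := by
  have := isSemisimpleModule_prod (A := A) (M := M) (N := N)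
  have hNM (f : N →ₗ[A] M) : f = 0 := by
    obtain ⟨g, hg⟩ := exists_comp_comp_eq_self f
    rw [← hg, hMN g, zero_comp, comp_zero]
  obtain ⟨a, ha⟩ := exists_smul_eq_of_forall_commute (commute_inl_comp_fst hMN hNM)
  exact ⟨a, fun m ↦ congr(($(ha (m, 0))).1), fun n ↦ congr(($(ha (0, n))).2)⟩

theorem exists_linearEquiv_submodule_of_ne_zero [IsSemisimpleModule A M] {f : M →ₗ[A] N}
    (hf : f ≠ 0) :
    ∃ (C : Submodule A M) (D : Submodule A N), Nontrivial C ∧ Nonempty (C ≃ₗ[A] D) := by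
  obtain ⟨C, hC⟩ := exists_isCompl (ker f)
  have e : C ≃ₗ[A] range f := f.kerComplementEquivRange hC.symm
  have : Nontrivial (range f) := by
    rwa [Submodule.nontrivial_iff_ne_bot, Ne, range_eq_bot]
  exact ⟨C, range f, e.toEquiv.nontrivial, ⟨e⟩⟩

end Semisimple

/-- The character of an `A`-module `M`, for an `R`-algebra `A`: the `R`-linear form sending `a : A`
to the trace of multiplication by `a` on `M`. Like `LinearMap.trace`, it is zero when `M` has no
finite `R`-basis. -/
noncomputable def moduleCharacter (R A M : Type*) [CommRing R] [Semiring A] [Algebra R A]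
    [AddCommGroup M] [Module R M] [Module A M] [IsScalarTower R A M] : A →ₗ[R] R :=
  trace R M ∘ₗ (Algebra.lsmul R R M).toLinearMap

section ModuleCharacter

variable {R A M N : Type*} [CommRing R] [Semiring A] [Algebra R A]
  [AddCommGroup M] [Module R M] [Module A M] [IsScalarTower R A M]
  [AddCommGroup N] [Module R N] [Module A N] [IsScalarTower R A N]

theorem moduleCharacter_apply (a : A) :
    moduleCharacter R A M a = trace R M (Algebra.lsmul R R M a) := rfl

theorem moduleCharacter_one [Module.Free R M] [Module.Finite R M] :
    moduleCharacter R A M 1 = finrank R M := by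
  rw [moduleCharacter_apply, map_one, trace_one]

theorem moduleCharacter_congr (e : M ≃ₗ[A] N) : moduleCharacter R A M = moduleCharacter R A N := by
  ext a
  have hconj : (e.restrictScalars R).conj (Algebra.lsmul R R M a) = Algebra.lsmul R R N a := by
    ext x
    simp [LinearEquiv.conj_apply]
  rw [moduleCharacter_apply, moduleCharacter_apply, ← hconj, trace_conj']

theorem moduleCharacter_prod [Module.Free R M] [Module.Finite R M] [Module.Free R N]
    [Module.Finite R N] :
    moduleCharacter R A (M × N) = moduleCharacter R A M + moduleCharacter R A N := by
  ext a
  exact trace_prodMap' (Algebra.lsmul R R M a) (Algebra.lsmul R R N a)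

end ModuleCharacter

section FiniteDimensional

variable {F A M N : Type*} [Field F] [Ring A] [Algebra F A]
  [AddCommGroup M] [Module F M] [Module A M] [IsScalarTower F A M] [FiniteDimensional F M]
  [AddCommGroup N] [Module F N] [Module A N] [IsScalarTower F A N] [FiniteDimensional F N]

instance finiteDimensional_submodule (C : Submodule A M) : FiniteDimensional F C :=
  inferInstanceAs (FiniteDimensional F (C.restrictScalars F))

theorem moduleCharacter_add_of_isCompl {C D : Submodule A M} (h : IsCompl C D) :
    moduleCharacter F A C + moduleCharacter F A D = moduleCharacter F A M := by
  rw [← moduleCharacter_prod, moduleCharacter_congr (C.prodEquivOfIsCompl D h)]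

theorem finrank_lt_of_isCompl {C D : Submodule A M} (h : IsCompl C D) [Nontrivial C] :
    finrank F D < finrank F M := by
  have hsum : finrank F (C × D) = finrank F M :=
    ((C.prodEquivOfIsCompl D h).restrictScalars F).finrank_eq
  have hpos : 0 < finrank F C := finrank_pos
  rw [finrank_prod] at hsum
  lia

variable [CharZero F]

theorem finrank_eq_of_moduleCharacter_eq (h : moduleCharacter F A M = moduleCharacter F A N) :
    finrank F M = finrank F N := by
  have h_one : (finrank F M : F) = finrank F N := by
    rw [← moduleCharacter_one (A := A), h, moduleCharacter_one]
  exact_mod_cast h_one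

variable [IsSemisimpleModule A M] [IsSemisimpleModule A N]

theorem exists_linearMap_ne_zero_of_moduleCharacter_eq [Nontrivial M]
    (h : moduleCharacter F A M = moduleCharacter F A N) : ∃ f : M →ₗ[A] N, f ≠ 0 := by
  by_contra! hMN
  have : Module.Finite (End A (M × N)) (M × N) := .of_restrictScalars_finite F _ _
  obtain ⟨a, haM, haN⟩ := exists_smul_eq_self_and_smul_eq_zero hMN
  have hM : Algebra.lsmul F F M a = LinearMap.id := LinearMap.ext haM
  have hN : Algebra.lsmul F F N a = 0 := LinearMap.ext haN
  have h_finrank : (finrank F M : F) = 0 := by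
    simpa only [moduleCharacter_apply, hM, hN, trace_id, map_zero] using congr($h a)
  exact finrank_pos.ne' (Nat.cast_eq_zero.mp h_finrank)

theorem nonempty_linearEquiv_of_moduleCharacter_eq
    (h : moduleCharacter F A M = moduleCharacter F A N) : Nonempty (M ≃ₗ[A] N) := by
  induction hn : finrank F M using Nat.strong_induction_on generalizing M N with
  | _ n ih =>
  rcases subsingleton_or_nontrivial M with _ | _
  · have : Subsingleton N := by
      rw [← finrank_zero_iff (R := F), ← finrank_eq_of_moduleCharacter_eq h]
      exact finrank_zero_of_subsingleton
    exact ⟨LinearEquiv.ofSubsingleton M N⟩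
  obtain ⟨f, hf⟩ := exists_linearMap_ne_zero_of_moduleCharacter_eq h
  obtain ⟨C, D, _, ⟨e⟩⟩ := exists_linearEquiv_submodule_of_ne_zero hf
  obtain ⟨C', hC⟩ := exists_isCompl C
  obtain ⟨D', hD⟩ := exists_isCompl D
  have h_compl : moduleCharacter F A C' = moduleCharacter F A D' := by
    rw [← moduleCharacter_add_of_isCompl hC, ← moduleCharacter_add_of_isCompl hD,
      moduleCharacter_congr e] at h
    exact add_left_cancel h
  obtain ⟨e'⟩ := ih _ (hn ▸ finrank_lt_of_isCompl hC) h_compl rfl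
  exact ⟨(C.prodEquivOfIsCompl C' hC).symm ≪≫ₗ e.prodCongr e' ≪≫ₗ D.prodEquivOfIsCompl D' hD⟩

theorem nonempty_linearEquiv_iff_moduleCharacter_eq :
    Nonempty (M ≃ₗ[A] N) ↔ moduleCharacter F A M = moduleCharacter F A N :=
  ⟨fun ⟨e⟩ ↦ moduleCharacter_congr e, nonempty_linearEquiv_of_moduleCharacter_eq⟩

end FiniteDimensional

section Representation

open Representation

theorem nonempty_asModule_linearEquiv_iff {R G V W : Type*} [CommSemiring R] [Monoid G]
    [AddCommMonoid V] [Module R V] [AddCommMonoid W] [Module R W]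
    (ρ : Representation R G V) (σ : Representation R G W) :
    Nonempty (ρ.asModule ≃ₗ[MonoidAlgebra R G] σ.asModule) ↔
      ∃ e : V ≃ₗ[R] W, ∀ g v, e (ρ g v) = σ g (e v) := by
  constructor
  · rintro ⟨e⟩
    let f : ρ.IntertwiningMap σ := (IntertwiningMap.equivLinearMapAsModule ρ σ).symm e
    exact ⟨.ofBijective f.toLinearMap e.bijective, f.isIntertwining⟩
  · rintro ⟨e, he⟩
    let f : ρ.IntertwiningMap σ := ⟨e, fun g ↦ LinearMap.ext (he g)⟩
    exact ⟨.ofBijective (IntertwiningMap.equivLinearMapAsModule ρ σ f) e.bijective⟩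

variable {R G V W : Type*} [CommRing R] [Monoid G] [AddCommGroup V] [Module R V]
  [AddCommGroup W] [Module R W] (ρ : Representation R G V) (σ : Representation R G W)

theorem moduleCharacter_asModule_single (g : G) :
    moduleCharacter R (MonoidAlgebra R G) ρ.asModule (MonoidAlgebra.single g 1) =
      trace R V (ρ g) :=
  congr(trace R V $(ρ.asAlgebraHom_single_one g))

theorem moduleCharacter_asModule_eq_iff :
    moduleCharacter R (MonoidAlgebra R G) ρ.asModule =
        moduleCharacter R (MonoidAlgebra R G) σ.asModule ↔
      ∀ g, trace R V (ρ g) = trace R W (σ g) := by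
  simp only [← moduleCharacter_asModule_single]
  exact ⟨fun h g ↦ congr($h _), fun h ↦ MonoidAlgebra.lhom_ext' fun g ↦ LinearMap.ext_ring (h g)⟩

end Representation

theorem semisimple_reps_iso_iff_char_eq_general
    {F : Type*} [Field F] [CharZero F] {G : Type*} [Monoid G]
    {V₁ V₂ : Type*} [AddCommGroup V₁] [Module F V₁] [AddCommGroup V₂] [Module F V₂]
    [FiniteDimensional F V₁] [FiniteDimensional F V₂]
    (ρ₁ : Representation F G V₁) (ρ₂ : Representation F G V₂)
    [IsSemisimpleModule (MonoidAlgebra F G) ρ₁.asModule]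
    [IsSemisimpleModule (MonoidAlgebra F G) ρ₂.asModule] :
    (∃ e : V₁ ≃ₗ[F] V₂, ∀ g v, e (ρ₁ g v) = ρ₂ g (e v)) ↔
    (∀ g, LinearMap.trace F V₁ (ρ₁ g) = LinearMap.trace F V₂ (ρ₂ g)) := by
  rw [← nonempty_asModule_linearEquiv_iff, ← moduleCharacter_asModule_eq_iff]
  exact nonempty_linearEquiv_iff_moduleCharacter_eq

/-- Bourbaki: Two finite-dimensional semisimple representations of a group
`G` over a field `F` of characteristic zero are isomorphic if and only if their
characters are equal. -/
theorem semisimple_reps_iso_iff_char_eq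
    (F : Type*) [Field F] [CharZero F] (G : Type*) [Group G]
    (V₁ V₂ : Type*) [AddCommGroup V₁] [Module F V₁] [AddCommGroup V₂] [Module F V₂]
    [FiniteDimensional F V₁] [FiniteDimensional F V₂]
    (ρ₁ : Representation F G V₁) (ρ₂ : Representation F G V₂)
    (h₁ : IsSemisimpleModule (MonoidAlgebra F G) ρ₁.asModule)
    (h₂ : IsSemisimpleModule (MonoidAlgebra F G) ρ₂.asModule) :
    (∃ e : V₁ ≃ₗ[F] V₂, ∀ g v, e (ρ₁ g v) = ρ₂ g (e v)) ↔
    (∀ g, LinearMap.trace F V₁ (ρ₁ g) = LinearMap.trace F V₂ (ρ₂ g)) :=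
  semisimple_reps_iso_iff_char_eq_general ρ₁ ρ₂
end

section
/- Let x₁, …, x_m be real numbers, each lying in the ℚ-subalgebra of ℝ generated by π (i.e., each xⱼ = pⱼ(π) for some polynomial pⱼ with rational coefficients). If x₁, …, x_m are linearly independent over ℚ, then x₁, …, x_m are linearly independent over the subfield of ℝ consisting of all real numbers that are algebraic over ℚ. -/
/-!
If `t` is transcendental over a subalgebra `B`, the powers of `t` are linearly independent over `B`,
so the algebra generated by `t` is linearly disjoint from `B`; for `B` the algebraic elements this
preserves linear independence, and everything reduces to the transcendence of `π`.

For that, suppose `exp θ = -1` with `θ` algebraic. Expanding `∏ (1 + exp θ') = 0` over the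
conjugates `θ'` of `θ` gives a vanishing sum of exponentials of subset sums, whose power sums are
rational by Galois invariance; the empty subset contributes `exp 0 = 1`, so collecting the zero
exponents turns it into `k + ∑ exp (z i) = 0` with `k` a positive integer and all `z i` nonzero.
Hermite's approximation of the `exp (z i)` with common denominator `n` prime to a large prime `p`
then produces, after clearing the leading coefficient of an integer polynomial vanishing at the
`z i`, an integer that is nonzero modulo `p` but of absolute value less than one.
-/

open Filter Polynomial
open scoped Nat

theorem isIntegral_pow_smul_aeval {R A : Type*} [CommRing R] [CommRing A] [Algebra R A] {r : R}
    {x : A} (hx : IsIntegral R (r • x)) {g : R[X]} {N : ℕ} (hg : g.natDegree ≤ N) :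
    IsIntegral R (r ^ N • aeval x g) := by
  rw [aeval_eq_sum_range, Finset.smul_sum]
  refine IsIntegral.sum _ fun i hi => ?_
  have hiN : i ≤ N := (Finset.mem_range_succ_iff.mp hi).trans hg
  have hterm : r ^ N • g.coeff i • x ^ i = (r ^ (N - i) * g.coeff i) • (r • x) ^ i := by
    rw [_root_.smul_pow, smul_smul, smul_smul, mul_right_comm, pow_sub_mul_pow r hiN]
  exact hterm ▸ (hx.pow i).smul _

theorem pow_smul_sum_aeval_mem_range_algebraMap {R K A ι : Type*} [CommRing R]
    [IsIntegrallyClosed R] [Field K] [Algebra R K] [IsFractionRing R K] [CommRing A] [Nontrivial A]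
    [Algebra R A] [Algebra K A] [IsScalarTower R K A] {s : Finset ι} {z : ι → A} {r : R}
    (hint : ∀ i ∈ s, IsIntegral R (r • z i))
    (hpow : ∀ n : ℕ, ∑ i ∈ s, z i ^ n ∈ (algebraMap K A).range)
    {g : R[X]} {N : ℕ} (hg : g.natDegree ≤ N) :
    r ^ N • ∑ i ∈ s, aeval (z i) g ∈ (algebraMap R A).range := by
  have h_integral : IsIntegral R (r ^ N • ∑ i ∈ s, aeval (z i) g) := by
    rw [Finset.smul_sum]
    exact IsIntegral.sum _ fun i hi => isIntegral_pow_smul_aeval (hint i hi) hg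
  have h_range : r ^ N • ∑ i ∈ s, aeval (z i) g ∈ (IsScalarTower.toAlgHom R K A).range := by
    simp only [aeval_eq_sum_range]
    rw [Finset.sum_comm]
    simp only [← Finset.smul_sum]
    exact Subalgebra.smul_mem _ (Subalgebra.sum_mem _ fun n _ =>
      Subalgebra.smul_mem _ (hpow n) _) _
  obtain ⟨q, hq⟩ := h_range
  rw [← hq] at h_integral ⊢
  obtain ⟨m, rfl⟩ := IsIntegrallyClosed.isIntegral_iff.mp
    ((isIntegral_algHom_iff (IsScalarTower.toAlgHom R K A) (algebraMap K A).injective).mp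
      h_integral)
  exact ⟨m, by simp [IsScalarTower.algebraMap_apply R K A]⟩

theorem exists_eval_zero_ne_zero_and_forall_aeval_eq_zero {R A ι : Type*} [CommRing R]
    [IsDomain R] [CommRing A] [NoZeroDivisors A] [Algebra R A] {s : Finset ι} {z : ι → A}
    (halg : ∀ i ∈ s, IsAlgebraic R (z i)) (hz : ∀ i ∈ s, z i ≠ 0) :
    ∃ f : R[X], f.eval 0 ≠ 0 ∧ ∀ i ∈ s, aeval (z i) f = 0 := by
  have hone (i : ι) (hi : i ∈ s) : ∃ f : R[X], f.coeff 0 ≠ 0 ∧ aeval (z i) f = 0 :=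
    (halg i hi).exists_nonzero_coeff_and_aeval_eq_zero (mem_nonZeroDivisors_of_ne_zero (hz i hi))
  choose! f hf0 hf using hone
  refine ⟨∏ i ∈ s, f i, ?_, fun i hi => ?_⟩
  · simpa only [eval_prod, ← coeff_zero_eq_eval_zero] using Finset.prod_ne_zero_iff.mpr hf0
  · rw [map_prod, Finset.prod_eq_zero hi (hf i hi)]

theorem norm_mul_add_mul_sum_le {E ι : Type*} [SeminormedCommRing E] {s : Finset ι} {w b : ι → E}
    {k n p : E} {ε : ℝ} (hw : k + ∑ i ∈ s, w i = 0) (h : ∀ i ∈ s, ‖n * w i - p * b i‖ ≤ ε) :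
    ‖n * k + p * ∑ i ∈ s, b i‖ ≤ s.card * ε := by
  have hsum : n * k + p * ∑ i ∈ s, b i = -∑ i ∈ s, (n * w i - p * b i) := by
    rw [Finset.sum_sub_distrib, ← Finset.mul_sum, ← Finset.mul_sum]
    linear_combination n * hw
  rw [hsum, norm_neg, ← nsmul_eq_mul]
  exact (norm_sum_le _ _).trans (Finset.sum_le_card_nsmul _ _ _ h)

theorem one_le_norm_pow_mul_of_prime_not_dvd {p : ℤ} (hp : Prime p) {D n k : ℤ} (hD : ¬ p ∣ D)
    (hn : ¬ p ∣ n) (hk : ¬ p ∣ k) {N : ℕ} {y : ℂ} (hy : D ^ N • y ∈ (algebraMap ℤ ℂ).range) :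
    1 ≤ ‖(D : ℂ) ^ N * (n * k + p * y)‖ := by
  obtain ⟨M, hM⟩ := hy
  have hne : D ^ N * (n * k) + p * M ≠ 0 := by
    intro h
    have hdvd : p ∣ D ^ N * (n * k) := (dvd_add_left (dvd_mul_right p M)).mp (h ▸ dvd_zero p)
    rcases hp.dvd_or_dvd hdvd with h | h
    · exact hD (hp.dvd_of_dvd_pow h)
    · exact (hp.dvd_or_dvd h).elim hn hk
  have hcast : (D : ℂ) ^ N * (n * k + p * y) = ((D ^ N * (n * k) + p * M : ℤ) : ℂ) := by
    simp only [algebraMap_int_eq, eq_intCast, zsmul_eq_mul, Int.cast_pow] at hM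
    push_cast
    rw [hM]
    ring
  rw [hcast, Complex.norm_intCast]
  exact_mod_cast Int.one_le_abs hne

theorem eventually_not_natCast_dvd {a : ℤ} (ha : a ≠ 0) : ∀ᶠ p : ℕ in atTop, ¬ (p : ℤ) ∣ a := by
  filter_upwards [eventually_gt_atTop a.natAbs] with p hp hdvd
  exact (Nat.le_of_dvd (Int.natAbs_pos.mpr ha) (Int.natCast_dvd.mp hdvd)).not_gt hp

theorem one_le_pow_mul_of_forall_norm_sub_le {ι : Type*} {s : Finset ι} {z : ι → ℂ} {f g : ℤ[X]}
    (hroot : ∀ i ∈ s, aeval (z i) f = 0)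
    (hpow : ∀ n : ℕ, ∑ i ∈ s, z i ^ n ∈ (algebraMap ℚ ℂ).range) {k : ℤ}
    (hsum : k + ∑ i ∈ s, Complex.exp (z i) = 0) {p : ℕ} (hp : p.Prime) {n : ℤ}
    (hpf : ¬ (p : ℤ) ∣ f.leadingCoeff) (hpn : ¬ (p : ℤ) ∣ n) (hpk : ¬ (p : ℤ) ∣ k) {N : ℕ}
    (hg : g.natDegree ≤ N) {ε : ℝ}
    (happrox : ∀ i ∈ s, ‖n • Complex.exp (z i) - p • aeval (z i) g‖ ≤ ε) :
    1 ≤ |(f.leadingCoeff : ℝ)| ^ N * (s.card * ε) := by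
  have hy : f.leadingCoeff ^ N • ∑ i ∈ s, aeval (z i) g ∈ (algebraMap ℤ ℂ).range :=
    pow_smul_sum_aeval_mem_range_algebraMap
      (fun i hi => isIntegral_leadingCoeff_smul f (z i) (hroot i hi)) hpow hg
  have hupper : ‖(n : ℂ) * k + (p : ℤ) * ∑ i ∈ s, aeval (z i) g‖ ≤ s.card * ε :=
    norm_mul_add_mul_sum_le hsum fun i hi => by simpa using happrox i hi
  calc
    1 ≤ ‖(f.leadingCoeff : ℂ) ^ N * (n * k + (p : ℤ) * ∑ i ∈ s, aeval (z i) g)‖ :=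
      one_le_norm_pow_mul_of_prime_not_dvd (Nat.prime_iff_prime_int.mp hp) hpf hpn hpk hy
    _ ≤ |(f.leadingCoeff : ℝ)| ^ N * (s.card * ε) := by
      rw [norm_mul, norm_pow, Complex.norm_intCast]
      gcongr

theorem intCast_add_sum_cexp_ne_zero {ι : Type*} {s : Finset ι} {z : ι → ℂ}
    (halg : ∀ i ∈ s, IsAlgebraic ℚ (z i)) (hz : ∀ i ∈ s, z i ≠ 0)
    (hpow : ∀ n : ℕ, ∑ i ∈ s, z i ^ n ∈ (algebraMap ℚ ℂ).range) {k : ℤ} (hk : k ≠ 0) :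
    k + ∑ i ∈ s, Complex.exp (z i) ≠ 0 := by
  intro hsum
  obtain ⟨f, hf0, hroot⟩ := exists_eval_zero_ne_zero_and_forall_aeval_eq_zero
    (fun i hi => (IsFractionRing.isAlgebraic_iff ℤ ℚ ℂ).mpr (halg i hi)) hz
  have hf : f ≠ 0 := fun h => hf0 (by rw [h, eval_zero])
  obtain ⟨c, happrox⟩ := LindemannWeierstrass.exp_polynomial_approx f hf0
  set B : ℝ := |(f.leadingCoeff : ℝ)| ^ f.natDegree * c with hB
  have hsmall : ∀ᶠ p : ℕ in atTop, s.card * B ^ p / (p - 1)! < 1 :=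
    (FloorSemiring.tendsto_mul_pow_div_factorial_sub_atTop (s.card : ℝ) B 1).eventually_lt_const
      one_pos
  obtain ⟨p, hp, hpsmall, hpf, hpk, hpf0⟩ :=
    ((Nat.frequently_atTop_iff_infinite.mpr Nat.infinite_setOfPred_prime).and_eventually
      (hsmall.and <| (eventually_not_natCast_dvd (leadingCoeff_ne_zero.mpr hf)).and <|
        (eventually_not_natCast_dvd hk).and <| eventually_gt_atTop _)).exists
  obtain ⟨n, hpn, g, hg, hbound⟩ := happrox p hpf0 hp
  refine hpsmall.not_ge ?_
  calc
    1 ≤ |(f.leadingCoeff : ℝ)| ^ (p * f.natDegree) * (s.card * (c ^ p / (p - 1)!)) :=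
      one_le_pow_mul_of_forall_norm_sub_le hroot hpow hsum hp hpf hpn hpk
        (hg.trans (Nat.sub_le _ _)) fun i hi => hbound (mem_aroots.mpr ⟨hf, hroot i hi⟩)
    _ = s.card * B ^ p / (p - 1)! := by
      rw [hB, mul_pow, ← pow_mul']
      ring

theorem sum_cexp_ne_zero_of_sum_pow_mem_range {ι : Type*} {s : Finset ι} {z : ι → ℂ}
    (halg : ∀ i ∈ s, IsAlgebraic ℚ (z i)) (hz : ∃ i ∈ s, z i = 0)
    (hpow : ∀ n : ℕ, ∑ i ∈ s, z i ^ n ∈ (algebraMap ℚ ℂ).range) :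
    ∑ i ∈ s, Complex.exp (z i) ≠ 0 := by
  have hsplit (h : ℂ → ℂ) : ∑ i ∈ s, h (z i) =
      (s.filter (z · = 0)).card * h 0 + ∑ i ∈ s with z i ≠ 0, h (z i) := by
    rw [← Finset.sum_filter_add_sum_filter_not s (z · = 0), ← nsmul_eq_mul,
      Finset.sum_eq_card_nsmul (b := h 0) fun i hi => by rw [(Finset.mem_filter.mp hi).2]]
  have hpow_ne (n : ℕ) : ∑ i ∈ s with z i ≠ 0, z i ^ n ∈ (algebraMap ℚ ℂ).range := by
    have h0 : ((s.filter (z · = 0)).card * 0 ^ n : ℂ) ∈ (algebraMap ℚ ℂ).range :=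
      mul_mem (natCast_mem _ _) (pow_mem (zero_mem _) n)
    simpa only [hsplit (· ^ n), add_sub_cancel_left] using sub_mem (hpow n) h0
  have hcard : ((s.filter (z · = 0)).card : ℤ) ≠ 0 := by
    obtain ⟨i, hi, hzi⟩ := hz
    exact_mod_cast Finset.card_ne_zero_of_mem (Finset.mem_filter.mpr ⟨hi, hzi⟩)
  rw [hsplit, Complex.exp_zero, mul_one]
  exact_mod_cast intCast_add_sum_cexp_ne_zero
    (fun i hi => halg i (Finset.mem_filter.mp hi).1) (fun i hi => (Finset.mem_filter.mp hi).2)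
    hpow_ne hcard

theorem sum_pow_sum_galois_mem_range_algebraMap {F K : Type*} [Field F] [Field K] [Algebra F K]
    [FiniteDimensional F K] [IsGalois F K] (θ : K) (n : ℕ) :
    ∑ S : Finset Gal(K/F), (∑ σ ∈ S, σ θ) ^ n ∈ (algebraMap F K).range := by
  refine (IsGalois.mem_range_algebraMap_iff_fixed _).mpr fun τ => ?_
  rw [map_sum]
  refine Fintype.sum_equiv (Equiv.mulLeft τ).finsetCongr _ _ fun S => ?_
  simp [map_sum]

theorem prod_one_add_cexp {ι : Type*} (s : Finset ι) (z : ι → ℂ) :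
    ∏ i ∈ s, (1 + Complex.exp (z i)) = ∑ t ∈ s.powerset, Complex.exp (∑ i ∈ t, z i) := by
  simp only [Finset.prod_one_add, Complex.exp_sum]

theorem cexp_algebraMap_ne_neg_one {K : Type*} [Field K] [Algebra ℚ K] [FiniteDimensional ℚ K]
    [IsGalois ℚ K] [Algebra K ℂ] (θ : K) : Complex.exp (algebraMap K ℂ θ) ≠ -1 := by
  intro hθ
  have hprod : ∏ σ : Gal(K/ℚ), (1 + Complex.exp (algebraMap K ℂ (σ θ))) = 0 :=
    Finset.prod_eq_zero (Finset.mem_univ 1) (by simp [hθ])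
  rw [prod_one_add_cexp, Finset.powerset_univ] at hprod
  refine sum_cexp_ne_zero_of_sum_pow_mem_range (fun S _ => ?_) ⟨∅, by simp⟩ (fun n => ?_) hprod
  · rw [← map_sum]
    exact (Algebra.IsAlgebraic.isAlgebraic _).algebraMap
  · obtain ⟨q, hq⟩ := sum_pow_sum_galois_mem_range_algebraMap (F := ℚ) θ n
    exact ⟨q, by simpa using congrArg (algebraMap K ℂ) hq⟩

theorem exists_isGalois_intermediateField_mem {F L : Type*} [Field F] [PerfectField F] [Field L]
    [IsAlgClosed L] [Algebra F L] {z : L} (hz : IsAlgebraic F z) :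
    ∃ K : IntermediateField F L, FiniteDimensional F K ∧ IsGalois F K ∧ z ∈ K := by
  let K := IntermediateField.adjoin F ((minpoly F z).rootSet L)
  have : (minpoly F z).IsSplittingField F K :=
    IntermediateField.adjoin_rootSet_isSplittingField (IsAlgClosed.splits _)
  have hfin : FiniteDimensional F K := IsSplittingField.finiteDimensional K (minpoly F z)
  have : Normal F K := Normal.of_isSplittingField (minpoly F z)
  have hmem : z ∈ (minpoly F z).rootSet L :=
    mem_rootSet.mpr ⟨minpoly.ne_zero hz.isIntegral, minpoly.aeval F z⟩
  exact ⟨K, hfin, ⟨⟩, IntermediateField.subset_adjoin F _ hmem⟩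

theorem cexp_ne_neg_one_of_isAlgebraic {z : ℂ} (hz : IsAlgebraic ℚ z) : Complex.exp z ≠ -1 := by
  obtain ⟨K, hfin, hgal, hzK⟩ := exists_isGalois_intermediateField_mem hz
  -- Both instances are restated for the `ℚ`-algebra structure that `K` has as a field.
  have : FiniteDimensional ℚ K := hfin
  have : IsGalois ℚ K := hgal
  exact cexp_algebraMap_ne_neg_one (⟨z, hzK⟩ : K)

theorem transcendental_pi : Transcendental ℚ Real.pi := by
  intro hpi
  exact cexp_ne_neg_one_of_isAlgebraic
    ((hpi.algebraMap (A := ℂ)).mul Complex.isIntegral_rat_I.isAlgebraic) Complex.exp_pi_mul_I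

theorem linearDisjoint_adjoin_singleton_of_transcendental {R A : Type*} [CommRing R] [CommRing A]
    [Algebra R A] [FaithfulSMul R A] (B : Subalgebra R A) {t : A} (ht : Transcendental B t) :
    (Algebra.adjoin R {t}).LinearDisjoint B := by
  have hinj : Function.Injective (algebraMap R B) :=
    .of_comp (f := B.val) (FaithfulSMul.algebraMap_injective R A)
  let e := algEquivOfTranscendental R t (ht.restrictScalars hinj)
  have hpow : LinearIndependent B fun n : ℕ => t ^ n := by
    simpa [Function.comp_def] using (basisMonomials B).linearIndependent.map_injOn
      (aeval t).toLinearMap (transcendental_iff_injective.mp ht).injOn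
  refine .of_basis_left _ _ ((basisMonomials R).map e.toLinearEquiv) ?_
  simpa [Function.comp_def, e] using hpow

theorem polynomials_in_pi_linearIndependent_over_algebraic_general {F A ι : Type*} [Field F]
    [CommRing A] [IsDomain A] [Algebra F A] {t : A} (ht : Transcendental F t) {x : ι → A}
    (hx : ∀ j, x j ∈ Algebra.adjoin F {t}) (hli : LinearIndependent F x) :
    LinearIndependent (Subalgebra.algebraicClosure F A) x :=
  (linearDisjoint_adjoin_singleton_of_transcendental _
    ht.subalgebraAlgebraicClosure).linearIndependent_left_of_flat
    (a := fun j => ⟨x j, hx j⟩) (.of_comp (Algebra.adjoin F {t}).val.toLinearMap hli)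

/-- Real numbers lying in the ℚ-subalgebra of ℝ generated by `π` (i.e.
rational polynomial expressions in `π`) that are linearly independent over `ℚ` are
linearly independent over the field of real algebraic numbers: no nontrivial linear
combination with real algebraic coefficients vanishes. -/
theorem polynomials_in_pi_linearIndependent_over_algebraic
    (m : ℕ) (x : Fin m → ℝ)
    (hx : ∀ j, ∃ p : Polynomial ℚ, x j = Polynomial.aeval Real.pi p)
    (hli : LinearIndependent ℚ x) :
    ∀ c : Fin m → ℝ, (∀ j, IsAlgebraic ℚ (c j)) → ∑ j, c j * x j = 0 → c = 0 := by
  intro c hc hsum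
  have hadj (j : Fin m) : x j ∈ Algebra.adjoin ℚ {Real.pi} :=
    (hx j).elim fun p hp => hp ▸ aeval_mem_adjoin_singleton ℚ Real.pi
  have hli' := polynomials_in_pi_linearIndependent_over_algebraic_general transcendental_pi hadj hli
  exact funext fun j => congrArg Subtype.val
    (Fintype.linearIndependent_iff.mp hli' (fun j => ⟨c j, hc j⟩) hsum j)
end
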